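/- arXiv:1206.3102 — 7 statements merged into one kernel-verified Lean document; each statement's English description precedes it below -/
import Mathlib

section
/- Let ρ be an n×n positive definite hermitian matrix, α ∈ ℝ, and let C_1, …, C_D be linearly independent hermitian matrices in M_n(ℂ). Set B_j = (Ω_ρ^α)^{-1}(C_j) (each B_j is hermitian) and let T be the real span of {B_1, …, B_D}. Then for any hermitian L ∈ M_n(ℂ), the function A ↦ tr[(A − L) Ω_ρ^α(A − L)] attains a unique minimum on T, and A* ∈ T is this minimizer if and only if tr[C_j A*] = tr[C_j L] for all j = 1, …, D. In particular, the minimizer is determined by the matching of the linear functionals A ↦ tr[C_j A] with those of L, a condition not involving α. -/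
open scoped Matrix ComplexOrder
/-- Real power `ρ^t` of a hermitian matrix, defined through the spectral
decomposition (continuous functional calculus applied to `x ↦ x ^ t`). -/
noncomputable def matrixRpow {n : Type*} [Fintype n] [DecidableEq n]
    {ρ : Matrix n n ℂ} (hρ : ρ.IsHermitian) (t : ℝ) : Matrix n n ℂ :=
  hρ.cfc fun x => x ^ t

/-- The superoperator `Ω_ρ^α(σ) = (1/2)(ρ^{-α} σ ρ^{α-1} + ρ^{α-1} σ ρ^{-α})`. -/
noncomputable def Omega {n : Type*} [Fintype n] [DecidableEq n]
    {ρ : Matrix n n ℂ} (hρ : ρ.IsHermitian) (α : ℝ) (σ : Matrix n n ℂ) : Matrix n n ℂ :=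
  (1 / 2 : ℂ) • (matrixRpow hρ (-α) * σ * matrixRpow hρ (α - 1)
    + matrixRpow hρ (α - 1) * σ * matrixRpow hρ (-α))


section helpers
variable {n : Type*} [Fintype n] [DecidableEq n] {ρ : Matrix n n ℂ}

lemma mr_star (h : ρ.IsHermitian) (t : ℝ) : (matrixRpow h t)ᴴ = matrixRpow h t := by
  unfold matrixRpow Matrix.IsHermitian.cfc
  rw [← Matrix.star_eq_conjTranspose, ← map_star, Matrix.star_eq_conjTranspose,
    Matrix.diagonal_conjTranspose]
  congr 2
  funext i
  simp

lemma mr_mul (h : ρ.PosDef) (s t : ℝ) :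
    matrixRpow h.1 s * matrixRpow h.1 t = matrixRpow h.1 (s + t) := by
  unfold matrixRpow Matrix.IsHermitian.cfc
  rw [← map_mul, Matrix.diagonal_mul_diagonal]
  congr 2
  funext i
  simp [Real.rpow_add (h.eigenvalues_pos i)]

lemma mr_zero (h : ρ.IsHermitian) : matrixRpow h 0 = 1 := by
  unfold matrixRpow Matrix.IsHermitian.cfc
  simp [Function.comp_def]

lemma om_add (h : ρ.IsHermitian) (α : ℝ) (X Y : Matrix n n ℂ) :
    Omega h α (X + Y) = Omega h α X + Omega h α Y := by
  simp only [Omega, mul_add, add_mul, smul_add]; abel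

lemma om_smul (h : ρ.IsHermitian) (α : ℝ) (c : ℝ) (X : Matrix n n ℂ) :
    Omega h α (c • X) = c • Omega h α X := by
  simp only [Omega, Matrix.mul_smul, Matrix.smul_mul, ← smul_add]
  rw [smul_comm]

/-- `Omega` as a real linear map. -/
noncomputable def omL (h : ρ.IsHermitian) (α : ℝ) : Matrix n n ℂ →ₗ[ℝ] Matrix n n ℂ where
  toFun := Omega h α
  map_add' := om_add h α
  map_smul' := om_smul h α

lemma om_star (h : ρ.IsHermitian) (α : ℝ) (X : Matrix n n ℂ) :
    (Omega h α X)ᴴ = Omega h α Xᴴ := by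
  simp only [Omega, Matrix.conjTranspose_smul, Matrix.conjTranspose_add,
    Matrix.conjTranspose_mul, mr_star, mul_assoc]
  rw [add_comm]
  simp

lemma om_symm (h : ρ.IsHermitian) (α : ℝ) (X Y : Matrix n n ℂ) :
    (X * Omega h α Y).trace = (Omega h α X * Y).trace := by
  simp only [Omega, Matrix.mul_smul, Matrix.smul_mul, Matrix.trace_smul, mul_add, add_mul,
    Matrix.trace_add]
  congr 1
  rw [add_comm]
  congr 1
  · rw [← mul_assoc, Matrix.trace_mul_comm]; simp only [mul_assoc]
  · rw [← mul_assoc, Matrix.trace_mul_comm]; simp only [mul_assoc]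

lemma sandwich (h : ρ.PosDef) (s t : ℝ) (X : Matrix n n ℂ) :
    (Xᴴ * (matrixRpow h.1 s * X * matrixRpow h.1 t)).trace =
      ((matrixRpow h.1 (s/2) * X * matrixRpow h.1 (t/2))ᴴ *
        (matrixRpow h.1 (s/2) * X * matrixRpow h.1 (t/2))).trace := by
  have e1 : matrixRpow h.1 s = matrixRpow h.1 (s/2) * matrixRpow h.1 (s/2) := by
    rw [mr_mul h]; congr 1; ring
  have e2 : matrixRpow h.1 t = matrixRpow h.1 (t/2) * matrixRpow h.1 (t/2) := by
    rw [mr_mul h]; congr 1; ring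
  rw [e1, e2]
  simp only [Matrix.conjTranspose_mul, mr_star]
  rw [← mul_assoc, ← mul_assoc, Matrix.trace_mul_comm]
  simp only [mul_assoc]

lemma sandwich_nonneg (h : ρ.PosDef) (s t : ℝ) (X : Matrix n n ℂ) :
    0 ≤ (Xᴴ * (matrixRpow h.1 s * X * matrixRpow h.1 t)).trace := by
  rw [sandwich h]
  exact (Matrix.posSemidef_conjTranspose_mul_self _).trace_nonneg

lemma om_nonneg (h : ρ.PosDef) (α : ℝ) (X : Matrix n n ℂ) :
    0 ≤ (Xᴴ * Omega h.1 α X).trace := by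
  simp only [Omega, Matrix.mul_smul, Matrix.trace_smul, mul_add, Matrix.trace_add]
  have h1 := sandwich_nonneg h (-α) (α-1) X
  have h2 := sandwich_nonneg h (α-1) (-α) X
  rw [smul_eq_mul]
  refine mul_nonneg ?_ (add_nonneg h1 h2)
  norm_num [Complex.le_def]

lemma om_def (h : ρ.PosDef) (α : ℝ) (X : Matrix n n ℂ)
    (hX : (Xᴴ * Omega h.1 α X).trace = 0) : X = 0 := by
  simp only [Omega, Matrix.mul_smul, Matrix.trace_smul, mul_add, Matrix.trace_add] at hX
  have h1 := sandwich_nonneg h (-α) (α-1) X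
  have h2 := sandwich_nonneg h (α-1) (-α) X
  have h3 : (Xᴴ * (matrixRpow h.1 (-α) * X * matrixRpow h.1 (α-1))).trace = 0 := by
    have := (smul_eq_zero.1 hX).resolve_left (by norm_num)
    exact ((add_eq_zero_iff_of_nonneg h1 h2).1 this).1
  rw [sandwich h, Matrix.trace_conjTranspose_mul_self_eq_zero_iff] at h3
  have h4 := congrArg (fun Z => matrixRpow h.1 (-(-α/2)) * Z * matrixRpow h.1 (-((α-1)/2))) h3
  simp only [mul_zero, zero_mul] at h4
  rw [mul_assoc, mul_assoc, mul_assoc, mr_mul h, ← mul_assoc, mr_mul h] at h4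
  simpa [mr_zero] using h4

lemma om_inj (h : ρ.PosDef) (α : ℝ) (X : Matrix n n ℂ) (hX : Omega h.1 α X = 0) : X = 0 :=
  om_def h α X (by simp [hX])

lemma tr_im (X Y : Matrix n n ℂ) (hX : X.IsHermitian) (hY : Y.IsHermitian) :
    (X * Y).trace.im = 0 := by
  have : star (X * Y).trace = (X * Y).trace := by
    rw [← Matrix.trace_conjTranspose, Matrix.conjTranspose_mul, hX.eq, hY.eq,
      Matrix.trace_mul_comm]
  exact Complex.conj_eq_iff_im.1 this

lemma om_quad (h : ρ.IsHermitian) (α : ℝ) (X Y : Matrix n n ℂ) :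
    ((X + Y) * Omega h α (X + Y)).trace =
      (X * Omega h α X).trace + 2 * (Omega h α Y * X).trace + (Y * Omega h α Y).trace := by
  have e := om_symm h α Y X
  rw [Matrix.trace_mul_comm] at e
  simp only [om_add, mul_add, add_mul, Matrix.trace_add]
  rw [om_symm h α Y X, Matrix.trace_mul_comm X (Omega h α Y)]
  ring

end helpers

/-- TDVP minimisation over the real span `T` of `B_j = (Ω_ρ^α)⁻¹(C_j)`: the `B_j` are
hermitian, the function `A ↦ tr[(A − L) Ω_ρ^α(A − L)]` attains a unique minimum on `T`,
and `A* ∈ T` is this minimizer iff `tr[C_j A*] = tr[C_j L]` for all `j` —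
a condition not involving `α`. -/
theorem tdvp_minimizer_characterization {n : Type*} [Fintype n] [DecidableEq n]
    {ρ : Matrix n n ℂ} (hρ : ρ.PosDef) (α : ℝ) {D : ℕ}
    (C : Fin D → Matrix n n ℂ) (hC : ∀ j, (C j).IsHermitian)
    (hCind : LinearIndependent ℝ C)
    (B : Fin D → Matrix n n ℂ) (hB : ∀ j, Omega hρ.1 α (B j) = C j)
    (L : Matrix n n ℂ) (hL : L.IsHermitian) :
    (∀ j, (B j).IsHermitian) ∧
    (∃! Astar : Matrix n n ℂ, Astar ∈ Submodule.span ℝ (Set.range B) ∧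
      ∀ A ∈ Submodule.span ℝ (Set.range B),
        Matrix.trace ((Astar - L) * Omega hρ.1 α (Astar - L)) ≤
          Matrix.trace ((A - L) * Omega hρ.1 α (A - L))) ∧
    (∀ Astar ∈ Submodule.span ℝ (Set.range B),
      ((∀ A ∈ Submodule.span ℝ (Set.range B),
          Matrix.trace ((Astar - L) * Omega hρ.1 α (Astar - L)) ≤
            Matrix.trace ((A - L) * Omega hρ.1 α (A - L))) ↔
        ∀ j, Matrix.trace (C j * Astar) = Matrix.trace (C j * L))) := by
  classical
  set T := Submodule.span ℝ (Set.range B) with hT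
  have hBh : ∀ j, (B j).IsHermitian := by
    intro j
    have := om_inj hρ α ((B j)ᴴ - B j) (by
      change omL hρ.1 α _ = 0
      rw [map_sub]
      change Omega hρ.1 α _ - Omega hρ.1 α _ = 0
      rw [← om_star, hB, (hC j).eq, sub_self])
    exact sub_eq_zero.1 this
  have hTh : ∀ V ∈ T, V.IsHermitian := by
    intro V hV
    induction hV using Submodule.span_induction with
    | mem x hx => obtain ⟨j, rfl⟩ := hx; exact hBh j
    | zero => exact Matrix.isHermitian_zero
    | add x y _ _ hx hy => exact hx.add hy
    | smul c x _ hx =>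
      change (c • x)ᴴ = c • x
      rw [Matrix.conjTranspose_smul, hx.eq, star_trivial]
  have hBT : ∀ j, B j ∈ T := fun j => Submodule.subset_span ⟨j, rfl⟩
  have hq0 : ∀ V, V.IsHermitian → 0 ≤ (V * Omega hρ.1 α V).trace := by
    intro V hV
    have := om_nonneg hρ α V
    rwa [hV.eq] at this
  have hqd : ∀ V, V.IsHermitian → (V * Omega hρ.1 α V).trace = 0 → V = 0 := by
    intro V hV h0
    exact om_def hρ α V (by rwa [hV.eq])
  -- orthogonality extends to the span
  have hspan : ∀ X : Matrix n n ℂ, (∀ j, (C j * X).trace = 0) →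
      ∀ V ∈ T, (Omega hρ.1 α V * X).trace = 0 := by
    intro X hX V hV
    induction hV using Submodule.span_induction with
    | mem x hx => obtain ⟨j, rfl⟩ := hx; rw [hB]; exact hX j
    | zero =>
      have : Omega hρ.1 α 0 = 0 := (omL hρ.1 α).map_zero
      simp [this]
    | add x y _ _ hx hy => rw [om_add, add_mul, Matrix.trace_add, hx, hy, add_zero]
    | smul c x _ hx => rw [om_smul, Matrix.smul_mul, Matrix.trace_smul, hx, smul_zero]
  have hiff : ∀ Astar ∈ T,
      ((∀ A ∈ T,
          Matrix.trace ((Astar - L) * Omega hρ.1 α (Astar - L)) ≤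
            Matrix.trace ((A - L) * Omega hρ.1 α (A - L))) ↔
        ∀ j, Matrix.trace (C j * Astar) = Matrix.trace (C j * L)) := by
    intro S hS
    have hSL : (S - L).IsHermitian := (hTh S hS).sub hL
    constructor
    · intro hmin j
      rw [← sub_eq_zero, ← Matrix.trace_sub, ← mul_sub]
      have him := tr_im (C j) (S - L) (hC j) hSL
      have hq := hq0 (B j) (hBh j)
      have key : ∀ t : ℝ, 0 ≤ 2 * t * (C j * (S - L)).trace.re
          + t ^ 2 * (B j * Omega hρ.1 α (B j)).trace.re := by
        intro t
        have h1 := hmin (S + t • B j) (T.add_mem hS (T.smul_mem t (hBT j)))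
        have e : S + t • B j - L = (S - L) + t • B j := by abel
        rw [e, om_quad, om_smul, hB, Matrix.smul_mul, Matrix.smul_mul, Matrix.mul_smul,
          Matrix.trace_smul, Matrix.trace_smul, Matrix.trace_smul] at h1
        have h2 := (Complex.le_def.1 h1).1
        simp only [Complex.add_re, Complex.mul_re, Complex.real_smul, Complex.re_ofNat,
          Complex.im_ofNat, Complex.ofReal_re, Complex.ofReal_im, zero_mul, sub_zero] at h2
        rw [hB]
        nlinarith [h2]
      have hqr := (Complex.le_def.1 hq).1
      simp only [Complex.zero_re] at hqr
      generalize (B j * Omega hρ.1 α (B j)).trace.re = q at key hqr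
      have hre : (C j * (S - L)).trace.re = 0 := by
        generalize (C j * (S - L)).trace.re = g at key
        have h1 := key (-g / (q + 1))
        have hp : 0 < q + 1 := by linarith
        have h2 : 2 * (-g / (q + 1)) * g + (-g / (q + 1)) ^ 2 * q
            = - (g ^ 2 * (q + 2)) / (q + 1) ^ 2 := by
          field_simp; ring
        rw [h2] at h1
        by_contra hg
        have : 0 < g ^ 2 * (q + 2) / (q + 1) ^ 2 := by positivity
        rw [neg_div] at h1
        linarith
      exact Complex.ext hre him
    · intro hj A hA
      have hV : A - S ∈ T := T.sub_mem hA hS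
      have h0 := hspan (S - L) (fun j => by
        rw [mul_sub, Matrix.trace_sub, hj j, sub_self]) (A - S) hV
      have e : A - L = (S - L) + (A - S) := by abel
      rw [e, om_quad, h0, mul_zero, add_zero]
      exact le_add_of_nonneg_right (hq0 _ (hTh _ hV))
  refine ⟨hBh, ?_, hiff⟩
  -- existence
  let Φ : (Fin D → ℝ) →ₗ[ℝ] (Fin D → ℝ) :=
    { toFun := fun c j => (C j * ∑ i, c i • B i).trace.re
      map_add' := by
        intro c d; funext j
        simp [add_smul, Finset.sum_add_distrib, mul_add, Matrix.trace_add]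
      map_smul' := by
        intro r c; funext j
        have : ∑ i, (r • c) i • B i = r • ∑ i, c i • B i := by
          simp [Finset.smul_sum, mul_smul]
        simp only [this, Matrix.mul_smul, Matrix.trace_smul]
        simp }
  have hmem : ∀ c : Fin D → ℝ, ∑ i, c i • B i ∈ T := fun c =>
    T.sum_mem fun i _ => T.smul_mem _ (hBT i)
  have hinj : Function.Injective Φ := by
    rw [injective_iff_map_eq_zero]
    intro c hc
    have h1 : ∀ j, (C j * ∑ i, c i • B i).trace = 0 := fun j =>
      Complex.ext (congrFun hc j) (tr_im _ _ (hC j) (hTh _ (hmem c)))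
    have h2 := hspan _ h1 _ (hmem c)
    rw [← om_symm] at h2
    have h3 := hqd _ (hTh _ (hmem c)) h2
    have h4 : ∑ i, c i • C i = 0 := by
      have := congrArg (omL hρ.1 α) h3
      rw [map_sum, map_zero] at this
      rw [← this]
      refine Finset.sum_congr rfl fun i _ => ?_
      rw [map_smul, ← hB i]; rfl
    funext i
    exact Fintype.linearIndependent_iff.1 hCind c h4 i
  obtain ⟨c, hc⟩ := (LinearMap.injective_iff_surjective.1 hinj) fun j => (C j * L).trace.re
  refine ⟨∑ i, c i • B i, ⟨hmem c, (hiff _ (hmem c)).2 fun j => ?_⟩, ?_⟩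
  · refine Complex.ext (congrFun hc j) ?_
    rw [tr_im _ _ (hC j) (hTh _ (hmem c)), tr_im _ _ (hC j) hL]
  · rintro S ⟨hS, hmin⟩
    have h1 := (hiff S hS).1 hmin
    have hV := T.sub_mem hS (hmem c)
    have h2 := hspan (S - ∑ i, c i • B i) (fun j => by
      rw [mul_sub, Matrix.trace_sub, h1 j, sub_eq_zero]
      refine Complex.ext (congrFun hc j).symm ?_
      rw [tr_im _ _ (hC j) (hTh _ (hmem c)), tr_im _ _ (hC j) hL]) _ hV
    rw [← om_symm] at h2
    exact sub_eq_zero.1 (hqd _ (hTh _ hV) h2)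
end

section
/- For every n×n positive definite hermitian matrix ρ, every α ∈ ℝ, and every A ∈ M_n(ℂ), the number tr[A† Ω_ρ^α(A)] is real and nonnegative, and tr[A† Ω_ρ^α(A)] = 0 if and only if A = 0. Hence (A,B) ↦ tr[A† Ω_ρ^α(B)] is a positive definite sesquilinear form on M_n(ℂ). -/
open scoped Matrix ComplexOrder
theorem matrixRpow_add_aux {n : Type*} [Fintype n] [DecidableEq n]
    {ρ : Matrix n n ℂ} (hρ : ρ.PosDef) (s t : ℝ) :
    matrixRpow hρ.1 s * matrixRpow hρ.1 t = matrixRpow hρ.1 (s + t) := by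
  unfold matrixRpow Matrix.IsHermitian.cfc
  rw [← map_mul, Matrix.diagonal_mul_diagonal]
  congr 2
  ext i
  simp [Real.rpow_add (hρ.eigenvalues_pos i)]

theorem matrixRpow_zero_aux {n : Type*} [Fintype n] [DecidableEq n]
    {ρ : Matrix n n ℂ} (hρ : ρ.IsHermitian) : matrixRpow hρ 0 = 1 := by
  unfold matrixRpow Matrix.IsHermitian.cfc
  rw [← map_one (Unitary.conjStarAlgAut ℂ _ hρ.eigenvectorUnitary), ← Matrix.diagonal_one]
  congr 2
  ext i
  simp

theorem matrixRpow_herm_aux {n : Type*} [Fintype n] [DecidableEq n]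
    {ρ : Matrix n n ℂ} (hρ : ρ.IsHermitian) (t : ℝ) :
    (matrixRpow hρ t)ᴴ = matrixRpow hρ t := by
  unfold matrixRpow Matrix.IsHermitian.cfc
  rw [← Matrix.star_eq_conjTranspose, ← map_star, Matrix.star_eq_conjTranspose,
    Matrix.diagonal_conjTranspose]
  congr 2
  ext i
  simp

theorem trace_aux {n : Type*} [Fintype n] [DecidableEq n]
    {ρ : Matrix n n ℂ} (hρ : ρ.PosDef) (s t : ℝ) (A : Matrix n n ℂ) :
    0 ≤ Matrix.trace (Aᴴ * (matrixRpow hρ.1 s * A * matrixRpow hρ.1 t)) ∧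
      (Matrix.trace (Aᴴ * (matrixRpow hρ.1 s * A * matrixRpow hρ.1 t)) = 0 → A = 0) := by
  have key : Matrix.trace (Aᴴ * (matrixRpow hρ.1 s * A * matrixRpow hρ.1 t)) =
      Matrix.trace ((matrixRpow hρ.1 (s/2) * A * matrixRpow hρ.1 (t/2))ᴴ *
        (matrixRpow hρ.1 (s/2) * A * matrixRpow hρ.1 (t/2))) := by
    have hs := matrixRpow_add_aux hρ (s/2) (s/2)
    have ht := matrixRpow_add_aux hρ (t/2) (t/2)
    rw [add_halves] at hs ht
    rw [← hs, ← ht, Matrix.conjTranspose_mul, Matrix.conjTranspose_mul,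
      matrixRpow_herm_aux, matrixRpow_herm_aux, Matrix.mul_assoc (matrixRpow hρ.1 (t/2)),
      Matrix.trace_mul_comm (matrixRpow hρ.1 (t/2))]
    simp only [Matrix.mul_assoc]
  rw [key]
  refine ⟨(Matrix.posSemidef_conjTranspose_mul_self _).trace_nonneg, fun h => ?_⟩
  rw [Matrix.trace_conjTranspose_mul_self_eq_zero_iff] at h
  have h1 := matrixRpow_add_aux hρ (-(s/2)) (s/2)
  have h2 := matrixRpow_add_aux hρ (t/2) (-(t/2))
  rw [neg_add_cancel, matrixRpow_zero_aux] at h1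
  rw [add_neg_cancel, matrixRpow_zero_aux] at h2
  calc A = (matrixRpow hρ.1 (-(s/2)) * matrixRpow hρ.1 (s/2)) * A *
        (matrixRpow hρ.1 (t/2) * matrixRpow hρ.1 (-(t/2))) := by rw [h1, h2]; simp
    _ = matrixRpow hρ.1 (-(s/2)) * (matrixRpow hρ.1 (s/2) * A * matrixRpow hρ.1 (t/2)) *
        matrixRpow hρ.1 (-(t/2)) := by simp only [Matrix.mul_assoc]
    _ = 0 := by rw [h]; simp

/-- `tr[A† Ω_ρ^α(A)]` is real and nonnegative (here expressed via the complex order),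
and it vanishes iff `A = 0`; hence `(A,B) ↦ tr[A† Ω_ρ^α(B)]` is positive definite. -/
theorem omega_posDef_form {n : Type*} [Fintype n] [DecidableEq n]
    {ρ : Matrix n n ℂ} (hρ : ρ.PosDef) (α : ℝ) (A : Matrix n n ℂ) :
    0 ≤ Matrix.trace (Aᴴ * Omega hρ.1 α A) ∧
      (Matrix.trace (Aᴴ * Omega hρ.1 α A) = 0 ↔ A = 0) := by
  obtain ⟨p1, z1⟩ := trace_aux hρ (-α) (α - 1) A
  obtain ⟨p2, z2⟩ := trace_aux hρ (α - 1) (-α) A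
  have e : Matrix.trace (Aᴴ * Omega hρ.1 α A) = (1 / 2 : ℂ) *
      (Matrix.trace (Aᴴ * (matrixRpow hρ.1 (-α) * A * matrixRpow hρ.1 (α - 1))) +
       Matrix.trace (Aᴴ * (matrixRpow hρ.1 (α - 1) * A * matrixRpow hρ.1 (-α)))) := by
    rw [Omega, Matrix.mul_smul, Matrix.trace_smul, Matrix.mul_add, Matrix.trace_add, smul_eq_mul]
  have hh : (0 : ℂ) ≤ 1 / 2 := by
    rw [Complex.le_def]
    norm_num
  refine ⟨?_, fun h => ?_, fun h => ?_⟩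
  · rw [e]
    exact mul_nonneg hh (add_nonneg p1 p2)
  · rw [e] at h
    have h' := (mul_eq_zero.mp h).resolve_left (by norm_num)
    exact z1 ((add_eq_zero_iff_of_nonneg p1 p2).mp h').1
  · subst h
    simp
end

section
/- For every n×n positive definite hermitian matrix ρ and every α ∈ ℝ, the linear superoperator Ω_ρ^α : M_n(ℂ) → M_n(ℂ) is bijective; in particular (Ω_ρ^α)^{-1} exists as a linear map on M_n(ℂ). -/
open scoped Matrix ComplexOrder
/-- The superoperator `Ω_ρ^α : M_n(ℂ) → M_n(ℂ)` is bijective. -/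
theorem omega_bijective {n : Type*} [Fintype n] [DecidableEq n]
    {ρ : Matrix n n ℂ} (hρ : ρ.PosDef) (α : ℝ) :
    Function.Bijective (Omega hρ.1 α) := by
  let φ := Unitary.conjStarAlgAut ℂ (Matrix n n ℂ) hρ.1.eigenvectorUnitary
  let c : n → n → ℝ := fun i j => (1 / 2 : ℝ) *
    ((hρ.1.eigenvalues i) ^ (-α) * (hρ.1.eigenvalues j) ^ (α - 1) +
      (hρ.1.eigenvalues i) ^ (α - 1) * (hρ.1.eigenvalues j) ^ (-α))
  have hc : ∀ i j, (c i j : ℂ) ≠ 0 := by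
    intro i j
    have hi := hρ.eigenvalues_pos i
    have hj := hρ.eigenvalues_pos j
    have : 0 < c i j := by
      dsimp only [c]
      positivity
    exact_mod_cast this.ne'
  let T : Matrix n n ℂ → Matrix n n ℂ := fun τ => Matrix.of fun i j => (c i j : ℂ) * τ i j
  have hT : Function.Bijective T := by
    refine Function.bijective_iff_has_inverse.2
      ⟨fun τ => Matrix.of fun i j => (c i j : ℂ)⁻¹ * τ i j, ?_, ?_⟩
    · intro τ
      ext i j
      simp [T, inv_mul_cancel_left₀ (hc i j)]
    · intro τ
      ext i j
      simp [T, mul_inv_cancel_left₀ (hc i j)]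
  have key : ∀ τ, Omega hρ.1 α (φ τ) = φ (T τ) := by
    intro τ
    have h : ∀ t, matrixRpow hρ.1 t =
      φ (Matrix.diagonal fun i => (((hρ.1.eigenvalues i) ^ t : ℝ) : ℂ)) := fun t => rfl
    unfold Omega
    rw [h, h, ← map_mul, ← map_mul, ← map_mul, ← map_mul, ← map_add, ← map_smul]
    congr 1
    ext i j
    simp only [Matrix.smul_apply, Matrix.add_apply, Matrix.mul_diagonal, Matrix.diagonal_mul, T, c,
      Matrix.of_apply, smul_eq_mul]
    push_cast
    ring
  have heq : Omega hρ.1 α = φ ∘ T ∘ φ.symm := by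
    funext σ
    have := key (φ.symm σ)
    rw [StarAlgEquiv.apply_symm_apply] at this
    exact this
  rw [heq]
  exact (EquivLike.bijective φ).comp (hT.comp (EquivLike.bijective φ.symm))
end

section
/- Let ρ be an n×n positive definite hermitian matrix, α ∈ ℝ, and let T_1, …, T_D be linearly independent hermitian matrices in M_n(ℂ). Then the D×D matrix G with entries G_{jk} = tr[T_j Ω_ρ^α(T_k)] has real entries, is symmetric, and is positive definite (hence invertible). -/
open scoped Matrix ComplexOrder
lemma rpow_posDef {n : Type*} [Fintype n] [DecidableEq n]
    {ρ : Matrix n n ℂ} (hρ : ρ.PosDef) (t : ℝ) : (matrixRpow hρ.1 t).PosDef := by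
  have h := fun i => Real.rpow_pos_of_pos (hρ.eigenvalues_pos i) t
  unfold matrixRpow Matrix.IsHermitian.cfc
  rw [Unitary.conjStarAlgAut_apply]
  rw [Matrix.IsUnit.posDef_star_right_conjugate_iff Unitary.isUnit_coe,
    Matrix.posDef_diagonal_iff]
  intro i
  simpa using h i

lemma rpow_half {n : Type*} [Fintype n] [DecidableEq n]
    {ρ : Matrix n n ℂ} (hρ : ρ.PosDef) (t : ℝ) :
    matrixRpow hρ.1 t = matrixRpow hρ.1 (t / 2) * matrixRpow hρ.1 (t / 2) := by
  unfold matrixRpow Matrix.IsHermitian.cfc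
  rw [← map_mul, Matrix.diagonal_mul_diagonal]
  congr 2
  funext i
  have := Real.rpow_add (hρ.eigenvalues_pos i) (t / 2) (t / 2)
  rw [add_halves] at this
  simp [this]

lemma trace_pos_aux {n : Type*} [Fintype n] [DecidableEq n]
    {ρ : Matrix n n ℂ} (hρ : ρ.PosDef) (s t : ℝ) {S : Matrix n n ℂ} (hS : S.IsHermitian)
    (h0 : S ≠ 0) : 0 < (Matrix.trace (S * (matrixRpow hρ.1 s * S * matrixRpow hρ.1 t))).re := by
  rw [rpow_half hρ s, rpow_half hρ t]
  have hC := rpow_posDef hρ (s / 2)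
  have hE := rpow_posDef hρ (t / 2)
  generalize matrixRpow hρ.1 (s / 2) = C at *
  generalize matrixRpow hρ.1 (t / 2) = E at *
  have e : Matrix.trace (S * (C * C * S * (E * E))) = Matrix.trace ((C * S * E)ᴴ * (C * S * E)) := by
    rw [Matrix.conjTranspose_mul, Matrix.conjTranspose_mul, hC.1.eq, hE.1.eq, hS.eq,
      ← mul_assoc, ← mul_assoc, Matrix.trace_mul_comm]
    simp only [mul_assoc]
  have hne : C * S * E ≠ 0 := by
    intro h
    rw [hE.isUnit.mul_left_eq_zero, hC.isUnit.mul_right_eq_zero] at h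
    exact h0 h
  rw [e]
  have h1 := (Matrix.posSemidef_conjTranspose_mul_self (C * S * E)).trace_nonneg
  have h2 := mt Matrix.trace_conjTranspose_mul_self_eq_zero_iff.1 hne
  exact (Complex.pos_iff.1 (lt_of_le_of_ne h1 (Ne.symm h2))).1

lemma omega_trace_pos {n : Type*} [Fintype n] [DecidableEq n]
    {ρ : Matrix n n ℂ} (hρ : ρ.PosDef) (α : ℝ) {S : Matrix n n ℂ} (hS : S.IsHermitian)
    (h0 : S ≠ 0) : 0 < (Matrix.trace (S * Omega hρ.1 α S)).re := by
  have h1 := trace_pos_aux hρ (-α) (α - 1) hS h0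
  have h2 := trace_pos_aux hρ (α - 1) (-α) hS h0
  unfold Omega
  rw [Matrix.mul_smul, mul_add, Matrix.trace_smul, Matrix.trace_add, smul_eq_mul]
  have : (1 / 2 : ℂ) = ((1 / 2 : ℝ) : ℂ) := by norm_num
  rw [this, Complex.re_ofReal_mul, Complex.add_re]
  linarith

lemma omega_trace_symm {n : Type*} [Fintype n] [DecidableEq n]
    {ρ : Matrix n n ℂ} (hρ : ρ.PosDef) (α : ℝ) (S R : Matrix n n ℂ) :
    Matrix.trace (S * Omega hρ.1 α R) = Matrix.trace (R * Omega hρ.1 α S) := by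
  unfold Omega
  generalize matrixRpow hρ.1 (-α) = A
  generalize matrixRpow hρ.1 (α - 1) = B
  simp only [Matrix.mul_smul, mul_add, Matrix.trace_smul, Matrix.trace_add]
  have key : ∀ X Y : Matrix n n ℂ,
      Matrix.trace (S * (X * R * Y)) = Matrix.trace (R * (Y * S * X)) := by
    intro X Y
    rw [← mul_assoc, ← mul_assoc, mul_assoc (S * X), Matrix.trace_mul_comm]
    simp only [mul_assoc]
  rw [key A B, key B A, add_comm]

lemma omega_trace_star {n : Type*} [Fintype n] [DecidableEq n]
    {ρ : Matrix n n ℂ} (hρ : ρ.PosDef) (α : ℝ) {S R : Matrix n n ℂ}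
    (hS : S.IsHermitian) (hR : R.IsHermitian) :
    star (Matrix.trace (S * Omega hρ.1 α R)) = Matrix.trace (S * Omega hρ.1 α R) := by
  have hO : (Omega hρ.1 α R)ᴴ = Omega hρ.1 α R := by
    have hA := (rpow_posDef hρ (-α)).1.eq
    have hB := (rpow_posDef hρ (α - 1)).1.eq
    unfold Omega
    generalize matrixRpow hρ.1 (-α) = A at *
    generalize matrixRpow hρ.1 (α - 1) = B at *
    have h2 : star (1 / 2 : ℂ) = 1 / 2 := by simp
    rw [Matrix.conjTranspose_smul, Matrix.conjTranspose_add, h2]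
    simp only [Matrix.conjTranspose_mul, hA, hB, hR.eq, mul_assoc]
    rw [add_comm]
  rw [← Matrix.trace_conjTranspose, Matrix.conjTranspose_mul, hS.eq, hO, Matrix.trace_mul_comm]

lemma omega_trace_sum {n : Type*} [Fintype n] [DecidableEq n]
    {ρ : Matrix n n ℂ} (hρ : ρ.PosDef) (α : ℝ) {D : ℕ}
    (T : Fin D → Matrix n n ℂ) (x : Fin D → ℝ) :
    (Matrix.trace ((∑ j, x j • T j) * Omega hρ.1 α (∑ k, x k • T k))).re =
      ∑ j, ∑ k, x j * ((Matrix.trace (T j * Omega hρ.1 α (T k))).re * x k) := by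
  have hO : Omega hρ.1 α (∑ k, x k • T k) = ∑ k, x k • Omega hρ.1 α (T k) := by
    unfold Omega
    simp only [Finset.mul_sum, Finset.sum_mul, Matrix.mul_smul, Matrix.smul_mul,
      ← Finset.sum_add_distrib, Finset.smul_sum]
    refine Finset.sum_congr rfl fun k _ => ?_
    rw [← smul_add, smul_comm]
  rw [hO]
  simp only [Finset.mul_sum, Finset.sum_mul, Matrix.mul_smul, Matrix.smul_mul,
    Matrix.trace_sum, Matrix.trace_smul, Complex.re_sum, Complex.smul_re, smul_eq_mul]
  refine Finset.sum_congr rfl fun j _ => Finset.sum_congr rfl fun k _ => ?_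
  rw [omega_trace_symm hρ α (T k)]
  ring

/-- The Gram matrix `G_{jk} = tr[T_j Ω_ρ^α(T_k)]` built from linearly independent
hermitian matrices `T_j` has real entries, is symmetric and is positive definite. -/
theorem gram_matrix_posDef {n : Type*} [Fintype n] [DecidableEq n]
    {ρ : Matrix n n ℂ} (hρ : ρ.PosDef) (α : ℝ) {D : ℕ}
    (T : Fin D → Matrix n n ℂ) (hT : ∀ j, (T j).IsHermitian)
    (hTind : LinearIndependent ℝ T) :
    (∀ j k, Matrix.trace (T j * Omega hρ.1 α (T k)) =
      ((Matrix.trace (T j * Omega hρ.1 α (T k))).re : ℂ)) ∧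
    (Matrix.of fun j k => (Matrix.trace (T j * Omega hρ.1 α (T k))).re).IsSymm ∧
    (Matrix.of fun j k => (Matrix.trace (T j * Omega hρ.1 α (T k))).re).PosDef := by
  have hsymm : (Matrix.of fun j k => (Matrix.trace (T j * Omega hρ.1 α (T k))).re).IsSymm := by
    ext j k
    simp only [Matrix.transpose_apply, Matrix.of_apply]
    rw [omega_trace_symm hρ]
  refine ⟨fun j k => ?_, hsymm, ?_⟩
  · exact (Complex.conj_eq_iff_re.1 (omega_trace_star hρ α (hT j) (hT k))).symm
  · refine Matrix.PosDef.of_dotProduct_mulVec_pos ?_ fun x hx => ?_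
    · rw [Matrix.IsHermitian, Matrix.conjTranspose_eq_transpose_of_trivial]
      exact hsymm
    · have h0 : ∑ j, x j • T j ≠ 0 := fun h =>
        hx (funext (Fintype.linearIndependent_iff.1 hTind x h))
      have hS : (∑ j, x j • T j).IsHermitian := by
        rw [Matrix.IsHermitian, Matrix.conjTranspose_sum]
        refine Finset.sum_congr rfl fun j _ => ?_
        rw [Matrix.conjTranspose_smul, (hT j).eq, star_trivial]
      have h := omega_trace_pos hρ α hS h0
      rw [omega_trace_sum hρ] at h
      simpa [dotProduct, Matrix.mulVec, Finset.mul_sum] using h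
end

section
/- Let ρ be an n×n positive definite hermitian matrix, α ∈ ℝ, let T_1, …, T_D be linearly independent hermitian matrices in M_n(ℂ), and let L be a hermitian matrix. Define G_{jk} = tr[T_j Ω_ρ^α(T_k)] and l_j = tr[T_j Ω_ρ^α(L)]. Then G is invertible, the vector l has real entries, and the function v ↦ tr[(Σ_j v^j T_j − L) Ω_ρ^α(Σ_k v^k T_k − L)] on ℝ^D attains its unique minimum at v = G^{-1} l. -/
open scoped Matrix ComplexOrder
section TdvpAux
variable {n : Type*} [Fintype n] [DecidableEq n] {ρ : Matrix n n ℂ}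

lemma matrixRpow_mul (hρ : ρ.PosDef) (s t : ℝ) :
    matrixRpow hρ.1 s * matrixRpow hρ.1 t = matrixRpow hρ.1 (s + t) := by
  unfold matrixRpow Matrix.IsHermitian.cfc
  rw [← map_mul, Matrix.diagonal_mul_diagonal]
  congr 2
  funext i
  simp [Real.rpow_add (hρ.eigenvalues_pos i)]

lemma matrixRpow_zero (hρ : ρ.PosDef) : matrixRpow hρ.1 0 = 1 := by
  unfold matrixRpow Matrix.IsHermitian.cfc
  simp [Function.comp_def]

lemma matrixRpow_herm (hρ : ρ.PosDef) (t : ℝ) : (matrixRpow hρ.1 t)ᴴ = matrixRpow hρ.1 t := by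
  unfold matrixRpow Matrix.IsHermitian.cfc
  rw [← Matrix.star_eq_conjTranspose, ← map_star, Matrix.star_eq_conjTranspose,
    Matrix.diagonal_conjTranspose]
  congr 2
  funext i
  simp

lemma tr_nonneg (hρ : ρ.PosDef) (s t : ℝ) {X : Matrix n n ℂ} (hX : X.IsHermitian) :
    0 ≤ (X * (matrixRpow hρ.1 s * X * matrixRpow hρ.1 t)).trace ∧
    ((X * (matrixRpow hρ.1 s * X * matrixRpow hρ.1 t)).trace = 0 → X = 0) := by
  set C := matrixRpow hρ.1 (t/2) with hC
  set E := matrixRpow hρ.1 (s/2) with hE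
  have hCC : matrixRpow hρ.1 t = C * C := by rw [hC, matrixRpow_mul hρ]; congr 1; ring
  have hEE : matrixRpow hρ.1 s = E * E := by rw [hE, matrixRpow_mul hρ]; congr 1; ring
  have key : (X * (matrixRpow hρ.1 s * X * matrixRpow hρ.1 t)).trace
      = ((C * X * E) * (C * X * E)ᴴ).trace := by
    rw [hCC, hEE, Matrix.conjTranspose_mul, Matrix.conjTranspose_mul, hX.eq, hC, hE,
      matrixRpow_herm hρ, matrixRpow_herm hρ, ← hC, ← hE]
    rw [show X * (E * E * X * (C * C)) = (X * E * E * X * C) * C by simp only [mul_assoc],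
      Matrix.trace_mul_comm]
    simp only [mul_assoc]
  rw [key]
  refine ⟨(Matrix.posSemidef_self_mul_conjTranspose _).trace_nonneg, fun h => ?_⟩
  rw [Matrix.trace_mul_conjTranspose_self_eq_zero_iff] at h
  have h1 : matrixRpow hρ.1 (-(t/2)) * C = 1 := by
    rw [hC, matrixRpow_mul hρ, neg_add_cancel, matrixRpow_zero hρ]
  have h2 : E * matrixRpow hρ.1 (-(s/2)) = 1 := by
    rw [hE, matrixRpow_mul hρ, add_neg_cancel, matrixRpow_zero hρ]
  calc X = (matrixRpow hρ.1 (-(t/2)) * C) * X * (E * matrixRpow hρ.1 (-(s/2))) := by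
        rw [h1, h2, one_mul, mul_one]
    _ = matrixRpow hρ.1 (-(t/2)) * (C * X * E) * matrixRpow hρ.1 (-(s/2)) := by
        simp only [mul_assoc]
    _ = 0 := by rw [h]; simp

lemma omega_nonneg (hρ : ρ.PosDef) (α : ℝ) {X : Matrix n n ℂ} (hX : X.IsHermitian) :
    0 ≤ (X * Omega hρ.1 α X).trace.re ∧ ((X * Omega hρ.1 α X).trace.re = 0 → X = 0) := by
  obtain ⟨a1, a2⟩ := tr_nonneg hρ (-α) (α - 1) hX
  obtain ⟨b1, b2⟩ := tr_nonneg hρ (α - 1) (-α) hX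
  have e : (X * Omega hρ.1 α X).trace.re =
      (1/2) * ((X * (matrixRpow hρ.1 (-α) * X * matrixRpow hρ.1 (α - 1))).trace.re
      + (X * (matrixRpow hρ.1 (α - 1) * X * matrixRpow hρ.1 (-α))).trace.re) := by
    unfold Omega
    rw [Matrix.mul_smul, Matrix.trace_smul, mul_add, Matrix.trace_add, ← Complex.add_re,
      show (1/2 : ℂ) = ((1/2 : ℝ) : ℂ) by push_cast; rfl, smul_eq_mul, Complex.re_ofReal_mul]
  rw [Complex.le_def] at a1 b1
  have a3 := a1.1
  have b3 := b1.1
  simp only [Complex.zero_re] at a3 b3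
  rw [e]
  refine ⟨by linarith, fun h => a2 ?_⟩
  apply Complex.ext
  · simp only [Complex.zero_re]; linarith
  · exact a1.2.symm

lemma omega_symm (hρ : ρ.PosDef) (α : ℝ) (X Y : Matrix n n ℂ) :
    (X * Omega hρ.1 α Y).trace = (Y * Omega hρ.1 α X).trace := by
  have h : ∀ A B : Matrix n n ℂ, (X * (A * Y * B)).trace = (Y * (B * X * A)).trace := by
    intro A B
    rw [show X * (A * Y * B) = (X * A) * (Y * B) by simp only [mul_assoc],
      Matrix.trace_mul_comm]
    simp only [mul_assoc]
  unfold Omega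
  simp only [Matrix.mul_smul, Matrix.trace_smul, mul_add, Matrix.trace_add]
  rw [h, h, add_comm]

lemma omega_real (hρ : ρ.PosDef) (α : ℝ) {X Y : Matrix n n ℂ} (hX : X.IsHermitian)
    (hY : Y.IsHermitian) :
    (((X * Omega hρ.1 α Y).trace.re : ℝ) : ℂ) = (X * Omega hρ.1 α Y).trace := by
  have hO : (Omega hρ.1 α Y)ᴴ = Omega hρ.1 α Y := by
    unfold Omega
    simp only [Matrix.conjTranspose_smul, Matrix.conjTranspose_add, Matrix.conjTranspose_mul,
      matrixRpow_herm hρ, hY.eq]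
    rw [add_comm]
    simp [mul_assoc]
  rw [← Complex.conj_eq_iff_re]
  change star _ = _
  rw [← Matrix.trace_conjTranspose, Matrix.conjTranspose_mul, hO, hX.eq, Matrix.trace_mul_comm]

/-- The real bilinear form. -/
noncomputable def omegaForm (hρ : ρ.PosDef) (α : ℝ) :
    Matrix n n ℂ →ₗ[ℝ] Matrix n n ℂ →ₗ[ℝ] ℝ :=
  LinearMap.mk₂ ℝ (fun X Y => (X * Omega hρ.1 α Y).trace.re)
    (fun X Y Z => by simp [add_mul])
    (fun c X Y => by simp)
    (fun X Y Z => by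
      have : Omega hρ.1 α (Y + Z) = Omega hρ.1 α Y + Omega hρ.1 α Z := by
        unfold Omega
        rw [← smul_add]; congr 1; noncomm_ring
      simp [this, mul_add])
    (fun c X Y => by
      have : Omega hρ.1 α (c • Y) = c • Omega hρ.1 α Y := by
        unfold Omega
        rw [smul_comm c]; simp
      simp [this])

end TdvpAux

/-- The TDVP quadratic functional `v ↦ tr[(Σ_j v^j T_j − L) Ω_ρ^α(Σ_k v^k T_k − L)]`:
the Gram matrix `G_{jk} = tr[T_j Ω_ρ^α(T_k)]` is invertible (and real), the vector
`l_j = tr[T_j Ω_ρ^α(L)]` has real entries, and the functional attains its unique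
minimum at `v = G⁻¹ l`. -/
theorem tdvp_solution {n : Type*} [Fintype n] [DecidableEq n]
    {ρ : Matrix n n ℂ} (hρ : ρ.PosDef) (α : ℝ) {D : ℕ}
    (T : Fin D → Matrix n n ℂ) (hT : ∀ j, (T j).IsHermitian)
    (hTind : LinearIndependent ℝ T)
    (L : Matrix n n ℂ) (hL : L.IsHermitian)
    (G : Matrix (Fin D) (Fin D) ℝ)
    (hG : G = Matrix.of fun j k => (Matrix.trace (T j * Omega hρ.1 α (T k))).re)
    (l : Fin D → ℝ) (hl : l = fun j => (Matrix.trace (T j * Omega hρ.1 α L)).re) :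
    (∀ j k, ((G j k : ℝ) : ℂ) = Matrix.trace (T j * Omega hρ.1 α (T k))) ∧
    IsUnit G ∧
    (∀ j, Matrix.trace (T j * Omega hρ.1 α L) = ((l j : ℝ) : ℂ)) ∧
    (∀ v : Fin D → ℝ,
      Matrix.trace ((∑ k, G⁻¹.mulVec l k • T k - L) *
          Omega hρ.1 α (∑ k, G⁻¹.mulVec l k • T k - L)) ≤
        Matrix.trace ((∑ k, v k • T k - L) * Omega hρ.1 α (∑ k, v k • T k - L))) ∧
    (∀ v : Fin D → ℝ, v ≠ G⁻¹.mulVec l →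
      Matrix.trace ((∑ k, G⁻¹.mulVec l k • T k - L) *
          Omega hρ.1 α (∑ k, G⁻¹.mulVec l k • T k - L)) <
        Matrix.trace ((∑ k, v k • T k - L) * Omega hρ.1 α (∑ k, v k • T k - L))) := by
  have hb : ∀ X Y, (X * Omega hρ.1 α Y).trace.re = omegaForm hρ α X Y := fun X Y => rfl
  have hsym : ∀ X Y, omegaForm hρ α X Y = omegaForm hρ α Y X := fun X Y => by
    rw [← hb, ← hb, omega_symm hρ]
  have hsum : ∀ x : Fin D → ℝ, (∑ k, x k • T k).IsHermitian := by
    intro x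
    unfold Matrix.IsHermitian
    rw [Matrix.conjTranspose_sum]
    refine Finset.sum_congr rfl fun k _ => ?_
    rw [Matrix.conjTranspose_smul, (hT k).eq, star_trivial]
  have hGv : ∀ x j, G.mulVec x j = omegaForm hρ α (T j) (∑ k, x k • T k) := by
    intro x j
    rw [map_sum]
    simp only [Matrix.mulVec, dotProduct, hG, Matrix.of_apply, hb, map_smul, smul_eq_mul]
    exact Finset.sum_congr rfl fun k _ => mul_comm _ _
  have hleft : ∀ (y : Fin D → ℝ) Z, omegaForm hρ α (∑ k, y k • T k) Z
      = ∑ k, y k * omegaForm hρ α (T k) Z := by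
    intro y Z
    simp [map_sum, LinearMap.sum_apply]
  have hli : ∀ x : Fin D → ℝ, ∑ k, x k • T k = 0 → x = 0 := fun x hx =>
    funext (Fintype.linearIndependent_iff.1 hTind x hx)
  have hU : IsUnit G := by
    rw [← Matrix.mulVec_injective_iff_isUnit]
    intro x y hxy
    have h0 : G.mulVec (x - y) = 0 := by
      rw [Matrix.mulVec_sub, sub_eq_zero]; exact hxy
    refine sub_eq_zero.1 (hli _ ((omega_nonneg hρ α (hsum _)).2 ?_))
    rw [hb, hleft]
    refine Finset.sum_eq_zero fun k _ => ?_
    rw [← hGv, h0, Pi.zero_apply, mul_zero]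
  have hw : G.mulVec (G⁻¹.mulVec l) = l := by
    rw [Matrix.mulVec_mulVec, Matrix.mul_nonsing_inv _ ((Matrix.isUnit_iff_isUnit_det _).1 hU),
      Matrix.one_mulVec]
  set w := G⁻¹.mulVec l with hwdef
  have hX : ∀ v : Fin D → ℝ, (∑ k, v k • T k - L).IsHermitian := fun v => (hsum v).sub hL
  have hexp : ∀ v : Fin D → ℝ,
      omegaForm hρ α (∑ k, v k • T k - L) (∑ k, v k • T k - L) =
      omegaForm hρ α (∑ k, w k • T k - L) (∑ k, w k • T k - L) +
      omegaForm hρ α (∑ k, (v - w) k • T k) (∑ k, (v - w) k • T k) := by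
    intro v
    have hd : ∑ k, v k • T k - L = (∑ k, w k • T k - L) + ∑ k, (v - w) k • T k := by
      simp only [Pi.sub_apply, sub_smul, Finset.sum_sub_distrib]
      abel
    have hz : omegaForm hρ α (∑ k, (v - w) k • T k) (∑ k, w k • T k - L) = 0 := by
      rw [hleft]
      refine Finset.sum_eq_zero fun k _ => ?_
      rw [map_sub, ← hGv, hw, ← hb, hl]
      simp
    rw [hd]
    generalize (∑ k, w k • T k - L) = A at *
    generalize (∑ k, (v - w) k • T k) = B at *
    simp only [map_add, LinearMap.add_apply]
    rw [hsym A B, hz]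
    ring
  refine ⟨fun j k => ?_, hU, fun j => ?_, fun v => ?_, fun v hv => ?_⟩
  · rw [hG]; exact omega_real hρ α (hT j) (hT k)
  · rw [hl]; exact (omega_real hρ α (hT j) hL).symm
  · rw [← omega_real hρ α (hX v) (hX v), ← omega_real hρ α (hX w) (hX w), Complex.real_le_real,
      hb, hb, hexp v]
    have := (omega_nonneg hρ α (hsum (v - w))).1
    rw [hb] at this
    linarith
  · rw [← omega_real hρ α (hX v) (hX v), ← omega_real hρ α (hX w) (hX w), Complex.real_lt_real,
      hb, hb, hexp v]
    have h1 := (omega_nonneg hρ α (hsum (v - w))).1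
    have h2 := (omega_nonneg hρ α (hsum (v - w))).2
    rw [hb] at h1 h2
    have h3 := lt_of_le_of_ne h1 fun h => hv (sub_eq_zero.1 (hli _ (h2 h.symm)))
    linarith
end

section
/- Let c_1, …, c_{2N} be hermitian complex matrices satisfying the Clifford relations c_k c_l + c_l c_k = 2δ_{kl}·I, set P_j = c_{2j-1} c_{2j}, and let ρ = ∏_{j=1}^N (1/2)(I + i λ_j P_j) for real numbers λ_1, …, λ_N. Then for all 1 ≤ k < l ≤ N, the commutator of ρ with c_{2k} c_{2l} is [ρ, c_{2k} c_{2l}] = (i/2)(λ_k c_{2k-1} c_{2l} + λ_l c_{2k} c_{2l-1}) ρ̂_{kl}, where ρ̂_{kl} = ∏_{j≠k,l} (1/2)(I + i λ_j P_j). -/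
open scoped Matrix

/-- The standard-form Gaussian state `ρ = ∏_{j=1}^N (1/2)(I + i λ_j c_{2j-1} c_{2j})`,
written as an ordered product (the factors pairwise commute), where `o j = c_{2j-1}` and
`e j = c_{2j}`. -/
noncomputable def gaussianStd {m : Type*} [Fintype m] [DecidableEq m] {N : ℕ}
    (o e : Fin N → Matrix m m ℂ) (lam : Fin N → ℝ) : Matrix m m ℂ :=
  ((List.finRange N).map fun j =>
    (2⁻¹ : ℂ) • (1 + (Complex.I * (lam j : ℂ)) • (o j * e j))).prod

/-- The state `ρ̂` with a subset `s` of the modes omitted: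
`∏_{j ∉ s} (1/2)(I + i λ_j c_{2j-1} c_{2j})`. -/
noncomputable def gaussianStdHat {m : Type*} [Fintype m] [DecidableEq m] {N : ℕ}
    (o e : Fin N → Matrix m m ℂ) (lam : Fin N → ℝ) (s : Finset (Fin N)) : Matrix m m ℂ :=
  (((List.finRange N).filter fun j => j ∉ s).map fun j =>
    (2⁻¹ : ℂ) • (1 + (Complex.I * (lam j : ℂ)) • (o j * e j))).prod

/-- Commutation of products of two elements out of pairwise anticommutation. -/
lemma commute_of_anti {R : Type*} [Ring R] {a b c d : R} (h1 : a * c = -(c * a))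
    (h2 : a * d = -(d * a)) (h3 : b * c = -(c * b)) (h4 : b * d = -(d * b)) :
    Commute (a * b) (c * d) := by
  show a * b * (c * d) = c * d * (a * b)
  calc a * b * (c * d) = a * (b * c) * d := by noncomm_ring
    _ = -((a * c) * (b * d)) := by rw [h3]; noncomm_ring
    _ = -(c * (a * d) * b) := by rw [h1, h4]; noncomm_ring
    _ = c * d * (a * b) := by rw [h2]; noncomm_ring

/-- For the standard-form Gaussian state and `k < l`,
`[ρ, c_{2k} c_{2l}] = (i/2)(λ_k c_{2k-1} c_{2l} + λ_l c_{2k} c_{2l-1}) ρ̂_{kl}`. -/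
theorem gaussianStd_commutator_offDiagonal {m : Type*} [Fintype m] [DecidableEq m]
    {N : ℕ} (o e : Fin N → Matrix m m ℂ)
    (ho : ∀ j, (o j).IsHermitian) (he : ∀ j, (e j).IsHermitian)
    (hoo : ∀ j k, o j * o k + o k * o j = if j = k then (2 : Matrix m m ℂ) else 0)
    (hee : ∀ j k, e j * e k + e k * e j = if j = k then (2 : Matrix m m ℂ) else 0)
    (hoe : ∀ j k, o j * e k + e k * o j = 0)
    (lam : Fin N → ℝ) (k l : Fin N) (hkl : k < l) :
    gaussianStd o e lam * (e k * e l) - (e k * e l) * gaussianStd o e lam =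
      (Complex.I / 2) •
        (((lam k : ℂ) • (o k * e l) + (lam l : ℂ) • (e k * o l)) *
          gaussianStdHat o e lam {k, l}) := by
  have hoe' : ∀ i j, o i * e j = -(e j * o i) := fun i j => eq_neg_of_add_eq_zero_left (hoe i j)
  have heo' : ∀ i j, e i * o j = -(o j * e i) := fun i j => by rw [hoe' j i, neg_neg]
  have hoo' : ∀ i j, i ≠ j → o i * o j = -(o j * o i) := fun i j h =>
    eq_neg_of_add_eq_zero_left (by rw [hoo i j, if_neg h])
  have hee' : ∀ i j, i ≠ j → e i * e j = -(e j * e i) := fun i j h =>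
    eq_neg_of_add_eq_zero_left (by rw [hee i j, if_neg h])
  have hsq : ∀ i, e i * e i = 1 := fun i => by
    have h := hee i i
    rw [if_pos rfl, ← two_smul ℂ] at h
    have h2 : (2 : Matrix m m ℂ) = (2 : ℂ) • 1 := by
      rw [two_smul]; norm_num
    rw [h2] at h
    exact smul_right_injective _ (two_ne_zero) h
  set f : Fin N → Matrix m m ℂ := fun j =>
    (2⁻¹ : ℂ) • (1 + (Complex.I * (lam j : ℂ)) • (o j * e j)) with hf
  have hfc : ∀ j (Y : Matrix m m ℂ), Commute (o j * e j) Y → Commute (f j) Y := fun j Y h =>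
    ((Commute.one_left Y).add_left (h.smul_left _)).smul_left _
  have hff : ∀ i j, Commute (f i) (f j) := by
    intro i j
    by_cases h : i = j
    · rw [h]
    · refine hfc _ _ (hfc _ _ ?_).symm
      exact (commute_of_anti (hoo' _ _ h) (hoe' _ _) (heo' _ _) (hee' _ _ h)).symm
  have hfX : ∀ j, j ≠ k → j ≠ l → Commute (f j) (e k * e l) := fun j h1 h2 =>
    hfc _ _ (commute_of_anti (hoe' _ _) (hoe' _ _) (hee' _ _ h1) (hee' _ _ h2))
  have hR : Commute (gaussianStdHat o e lam {k, l}) (e k * e l) := by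
    unfold gaussianStdHat
    refine Commute.list_prod_left _ _ ?_
    intro x hx
    obtain ⟨j, hj, rfl⟩ := List.mem_map.1 hx
    have := (List.mem_filter.1 hj).2
    simp only [Finset.mem_insert, Finset.mem_singleton, not_or, decide_eq_true_eq] at this
    exact hfX j this.1 this.2
  have hprod : gaussianStd o e lam = f k * f l * gaussianStdHat o e lam {k, l} := by
    unfold gaussianStd gaussianStdHat
    have hp : (List.finRange N).Perm
        (k :: l :: (List.finRange N).filter fun j => j ∉ ({k, l} : Finset (Fin N))) := by
      rw [List.perm_ext_iff_of_nodup (List.nodup_finRange N)]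
      · intro a
        simp
        tauto
      · have := (List.nodup_finRange N).filter (fun j => j ∉ ({k, l} : Finset (Fin N)))
        simp only [List.nodup_cons]
        refine ⟨?_, ?_, this⟩
        · simp [hkl.ne]
        · simp
    have := (hp.map f).prod_eq' (by
      rw [List.pairwise_map]
      exact List.pairwise_of_forall (fun i j => hff i j))
    rw [this, List.map_cons, List.map_cons, List.prod_cons, List.prod_cons, mul_assoc]
  have hA : o k * e k * (e k * e l) = o k * e l := by
    rw [mul_assoc, ← mul_assoc (e k), hsq, one_mul]
  have hA' : (e k * e l) * (o k * e k) = -(o k * e l) := by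
    calc (e k * e l) * (o k * e k) = e k * (e l * o k) * e k := by noncomm_ring
      _ = -((e k * o k) * (e l * e k)) := by rw [heo']; noncomm_ring
      _ = -(o k * (e k * e k) * e l) := by rw [heo', hee' l k hkl.ne']; noncomm_ring
      _ = _ := by rw [hsq, mul_one]
  have hB' : (e k * e l) * (o l * e l) = -(e k * o l) := by
    calc (e k * e l) * (o l * e l) = e k * (e l * o l) * e l := by noncomm_ring
      _ = -(e k * o l * (e l * e l)) := by rw [heo']; noncomm_ring
      _ = _ := by rw [hsq, mul_one]
  have hB : (o l * e l) * (e k * e l) = e k * o l := by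
    calc (o l * e l) * (e k * e l) = o l * (e l * e k) * e l := by noncomm_ring
      _ = -((o l * e k) * (e l * e l)) := by rw [hee' l k hkl.ne']; noncomm_ring
      _ = _ := by rw [hsq, mul_one, hoe', neg_neg]
  have hAB : (o k * e k) * (o l * e l) * (e k * e l)
      = (e k * e l) * ((o k * e k) * (o l * e l)) := by
    rw [mul_assoc, hB, ← mul_assoc (e k * e l), hA']
    calc o k * e k * (e k * o l) = o k * (e k * e k) * o l := by noncomm_ring
      _ = o k * o l := by rw [hsq, mul_one]
      _ = -(o k * (e l * o l) * e l) := by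
        rw [heo' l l, mul_neg, neg_mul, neg_neg, mul_assoc, mul_assoc, hsq, mul_one]
      _ = _ := by noncomm_ring
  have hcomm : f k * f l * (e k * e l) - (e k * e l) * (f k * f l) =
      (Complex.I / 2) • ((lam k : ℂ) • (o k * e l) + (lam l : ℂ) • (e k * o l)) := by
    simp only [hf]
    generalize o k * e k = P at *
    generalize o l * e l = Q at *
    generalize e k * e l = X at *
    simp only [smul_mul_assoc, mul_smul_comm, mul_add, add_mul, one_mul, mul_one, smul_add,
      smul_smul, hA, hA', hB, hB', hAB, smul_neg]
    module
  rw [hprod, mul_assoc (f k * f l), hR.eq, ← mul_assoc (f k * f l), ← mul_assoc (e k * e l), ← sub_mul, hcomm,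
    smul_mul_assoc]
end

section
/- Let c_1, …, c_{2N} be hermitian complex matrices satisfying the Clifford relations c_k c_l + c_l c_k = 2δ_{kl}·I, set P_j = c_{2j-1} c_{2j}, and let ρ = ∏_{j=1}^N (1/2)(I + i λ_j P_j) for real numbers λ_1, …, λ_N. Then for all 1 ≤ k < l ≤ N, the anticommutator of ρ with c_{2k} c_{2l} is {ρ, c_{2k} c_{2l}} = (1/2)(c_{2k} c_{2l} − λ_k λ_l c_{2k-1} c_{2l-1}) ρ̂_{kl}, where ρ̂_{kl} = ∏_{j≠k,l} (1/2)(I + i λ_j P_j). -/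
open scoped Matrix

theorem anti_commute_mul {R : Type*} [Ring R] {a c d : R} (h1 : a * c = -(c * a))
    (h2 : a * d = -(d * a)) : Commute a (c * d) := by
  show a * (c * d) = c * d * a
  rw [← mul_assoc, h1, neg_mul, mul_assoc, h2, mul_neg, neg_neg, mul_assoc]

/-- For the standard-form Gaussian state and `k < l`,
`{ρ, c_{2k} c_{2l}} = (1/2)(c_{2k} c_{2l} − λ_k λ_l c_{2k-1} c_{2l-1}) ρ̂_{kl}`. -/
theorem gaussianStd_anticommutator_offDiagonal {m : Type*} [Fintype m] [DecidableEq m]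
    {N : ℕ} (o e : Fin N → Matrix m m ℂ)
    (ho : ∀ j, (o j).IsHermitian) (he : ∀ j, (e j).IsHermitian)
    (hoo : ∀ j k, o j * o k + o k * o j = if j = k then (2 : Matrix m m ℂ) else 0)
    (hee : ∀ j k, e j * e k + e k * e j = if j = k then (2 : Matrix m m ℂ) else 0)
    (hoe : ∀ j k, o j * e k + e k * o j = 0)
    (lam : Fin N → ℝ) (k l : Fin N) (hkl : k < l) :
    gaussianStd o e lam * (e k * e l) + (e k * e l) * gaussianStd o e lam =
      (1 / 2 : ℂ) •
        ((e k * e l - ((lam k : ℂ) * (lam l : ℂ)) • (o k * o l)) *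
          gaussianStdHat o e lam {k, l}) := by
  have aoe : ∀ j k, o j * e k = -(e k * o j) := fun j k => eq_neg_of_add_eq_zero_left (hoe j k)
  have aeo : ∀ j k, e j * o k = -(o k * e j) := fun j k => by rw [aoe, neg_neg]
  have aoo : ∀ j k, j ≠ k → o j * o k = -(o k * o j) := fun j k h =>
    eq_neg_of_add_eq_zero_left (by rw [hoo, if_neg h])
  have aee : ∀ j k, j ≠ k → e j * e k = -(e k * e j) := fun j k h =>
    eq_neg_of_add_eq_zero_left (by rw [hee, if_neg h])
  have esq : ∀ j, e j * e j = 1 := fun j => by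
    have h := hee j j
    rw [if_pos rfl, ← two_smul ℂ (e j * e j)] at h
    have h2 : (2 : Matrix m m ℂ) = (2 : ℂ) • 1 := by
      rw [two_smul, one_add_one_eq_two]
    rw [h2] at h
    exact smul_right_injective _ (two_ne_zero : (2 : ℂ) ≠ 0) h
  have ceP : ∀ j i, j ≠ i → Commute (e j) (o i * e i) := fun j i h =>
    anti_commute_mul (aeo j i) (aee j i h)
  have coP : ∀ j i, j ≠ i → Commute (o j) (o i * e i) := fun j i h =>
    anti_commute_mul (aoo j i h) (aoe j i)
  have hF : ∀ (A : Matrix m m ℂ) j, Commute A (o j * e j) →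
      Commute A ((2⁻¹ : ℂ) • (1 + (Complex.I * (lam j : ℂ)) • (o j * e j))) := fun A j h =>
    (((Commute.one_right A).add_right (h.smul_right _)).smul_right _)
  have hne : k ≠ l := hkl.ne
  have hperm : (List.finRange N).Perm
      (k :: l :: (List.finRange N).filter fun j => j ∉ ({k, l} : Finset (Fin N))) := by
    rw [List.perm_ext_iff_of_nodup (List.nodup_finRange N)]
    · intro a
      simp only [List.mem_finRange, List.mem_cons, List.mem_filter, Finset.mem_insert,
        Finset.mem_singleton, true_and, decide_eq_true_eq, true_iff]
      tauto
    · simp [hne, (List.nodup_finRange N).filter]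
  have hprod : gaussianStd o e lam =
      ((2⁻¹ : ℂ) • (1 + (Complex.I * (lam k : ℂ)) • (o k * e k))) *
      (((2⁻¹ : ℂ) • (1 + (Complex.I * (lam l : ℂ)) • (o l * e l))) *
        gaussianStdHat o e lam {k, l}) := by
    unfold gaussianStd gaussianStdHat
    rw [(hperm.map _).prod_eq', List.map_cons, List.map_cons, List.prod_cons, List.prod_cons]
    rw [List.pairwise_map]
    refine (List.nodup_finRange N).imp ?_
    intro a b hab
    refine hF _ _ (Commute.symm (hF _ _ ?_))
    exact ((coP a b hab).mul_left (ceP a b hab)).symm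
  have hcomm : Commute (e k * e l) (gaussianStdHat o e lam {k, l}) := by
    unfold gaussianStdHat
    refine Commute.list_prod_right _ _ ?_
    intro x hx
    simp only [List.mem_map, List.mem_filter, Finset.mem_insert,
        Finset.mem_singleton, decide_eq_true_eq, not_or] at hx
    obtain ⟨j, ⟨-, hjk, hjl⟩, rfl⟩ := hx
    exact hF _ _ ((ceP k j (Ne.symm hjk)).mul_left (ceP l j (Ne.symm hjl)))
  rw [hprod]
  generalize gaussianStdHat o e lam {k, l} = R at *
  -- P_k and P_l anticommute with X = e k * e l
  have hk : (o k * e k) * (e k * e l) = o k * e l := by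
    rw [mul_assoc, ← mul_assoc (e k), esq, one_mul]
  have hk' : (e k * e l) * (o k * e k) = -(o k * e l) := by
    rw [mul_assoc, (ceP l k hne.symm).eq, mul_assoc, ← mul_assoc (e k), aeo, neg_mul, mul_assoc,
      ← mul_assoc (e k), esq, one_mul]
  have hl : (o l * e l) * (e k * e l) = -(o l * e k) := by
    rw [mul_assoc, ← mul_assoc (e l), aee l k hne.symm, neg_mul, mul_assoc, esq, mul_one, mul_neg]
  have hl' : (e k * e l) * (o l * e l) = o l * e k := by
    rw [mul_assoc, ← mul_assoc (e l), aeo, neg_mul, mul_assoc, esq, mul_one, mul_neg, aeo, neg_neg]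
  have hkl1 : (o k * e k) * ((o l * e l) * (e k * e l)) = o k * o l := by
    rw [hl, mul_neg, mul_assoc, ← mul_assoc (e k), aeo, neg_mul, mul_assoc, esq, mul_one,
      mul_neg, neg_neg]
  have hkl2 : (e k * e l) * ((o k * e k) * (o l * e l)) = o k * o l := by
    rw [← mul_assoc, hk', neg_mul, mul_assoc, ← mul_assoc (e l), aeo, neg_mul, mul_assoc, esq,
      mul_one, mul_neg, neg_neg]
  generalize o k * e k = P at *
  generalize o l * e l = Q at *
  generalize e k * e l = X at *
  have e1 : ∀ A B : Matrix m m ℂ, A * (B * R) * X = (A * (B * X)) * R := fun A B => by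
    rw [mul_assoc, mul_assoc, ← hcomm.eq]; simp only [mul_assoc]
  have e2 : ∀ A B : Matrix m m ℂ, X * (A * (B * R)) = (X * (A * B)) * R := fun A B => by
    simp only [mul_assoc]
  rw [e1, e2, ← add_mul, ← smul_mul_assoc]
  congr 1
  have hkl1' : P * (o l * e k) = -(o k * o l) := by
    rw [← hkl1, hl, mul_neg, neg_neg]
  simp only [smul_mul_assoc, mul_smul_comm, add_mul, mul_add, one_mul, mul_one, smul_add,
    hkl1', hkl2, hk, hk', hl, hl', smul_smul, smul_neg, smul_sub, mul_neg, neg_neg]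
  generalize o k * o l = Y
  generalize o k * e l = Z
  generalize o l * e k = W
  have hI : Complex.I ^ 2 = -1 := Complex.I_sq
  match_scalars
  · ring
  · ring
  · ring
  · linear_combination (2⁻¹ : ℂ) * (lam k : ℂ) * (lam l : ℂ) * hI
end
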